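/- For every complex number s with Re(s) > 1/2, the series Σ_{n=1}^∞ (−1)^n (1*λ_odd)(n)/n^s converges and equals (1 + 2^{−s})(2^{1−s} − 1) ζ(2s). -/

import Mathlib

open Complex

/-- The Liouville function `λ(n) = (-1)^Ω(n)`. -/
def liouville (n : ℕ) : ℤ := (-1) ^ (ArithmeticFunction.cardFactors n)

/-- `λ_odd(n) = λ(n)` for odd `n`, and `0` for even `n`. -/
def lambdaOdd (n : ℕ) : ℤ := if Odd n then liouville n else 0

/-!
Write `a = 1 * λ_odd` and read `f(n/2)` as `0` for odd `n`. Since `λ(2m) = -λ(m)`, we have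
`λ_odd(n) = λ(n) + λ(n/2)`. Now `1 * λ` is the indicator of the nonzero squares, with Dirichlet
series `ζ(2s)` for `Re s > 1/2`, and passing from `f(n)` to `f(n/2)` multiplies the series by
`2^{-s}`; hence `∑ a(n) n^{-s} = (1 + 2^{-s}) ζ(2s)`. Finally `a(2n) = a(n)` gives
`(-1)^n a(n) = 2 a(n/2) - a(n)`, so the signs contribute the factor `2^{1-s} - 1`.
-/

lemma isSquare_mul_iff_of_isRelPrime {α : Type*} [CommMonoidWithZero α] [GCDMonoid α]
    [Subsingleton αˣ] {a b : α} (hab : IsRelPrime a b) :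
    IsSquare (a * b) ↔ IsSquare a ∧ IsSquare b := by
  refine ⟨fun h ↦ ?_, fun h ↦ h.1.mul h.2⟩
  obtain ⟨r, hr⟩ := h.exists_sq
  simp only [isSquare_iff_exists_sq]
  exact ⟨exists_eq_pow_of_mul_eq_pow (gcd_isUnit_iff_isRelPrime.mpr hab) hr,
    exists_eq_pow_of_mul_eq_pow (gcd_isUnit_iff_isRelPrime.mpr hab.symm) (mul_comm b a ▸ hr)⟩

lemma isSquare_prime_pow_iff {p k : ℕ} (hp : p.Prime) : IsSquare (p ^ k) ↔ Even k := by
  refine ⟨fun ⟨r, hr⟩ ↦ ?_, fun h ↦ h.isSquare_pow p⟩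
  have hr0 : r ≠ 0 := by
    rintro rfl
    exact pow_ne_zero k hp.ne_zero hr
  have hfac := congrArg (fun n ↦ n.factorization p) hr
  simp only [hp.factorization_pow, Nat.factorization_mul hr0 hr0, Finsupp.single_eq_same,
    Finsupp.add_apply] at hfac
  exact ⟨_, hfac⟩

lemma liouville_prime_pow {p : ℕ} (hp : p.Prime) (k : ℕ) :
    ArithmeticFunction.liouville (p ^ k) = (-1) ^ k := by
  rw [ArithmeticFunction.liouville_apply (pow_ne_zero k hp.ne_zero),
    ArithmeticFunction.cardFactors_apply_prime_pow hp]

lemma sum_divisors_liouville_prime_pow {p : ℕ} (hp : p.Prime) (k : ℕ) :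
    ∑ d ∈ (p ^ k).divisors, ArithmeticFunction.liouville d = if Even k then 1 else 0 := by
  simp only [Nat.sum_divisors_prime_pow hp, liouville_prime_pow hp, neg_one_geom_sum,
    Nat.even_add_one, ite_not]

lemma sum_divisors_mul_of_coprime {R : Type*} [CommSemiring R] {f : ArithmeticFunction R}
    (hf : f.IsMultiplicative) {a b : ℕ} (hab : a.Coprime b) :
    ∑ d ∈ (a * b).divisors, f d = (∑ d ∈ a.divisors, f d) * ∑ d ∈ b.divisors, f d := by
  simp only [← ArithmeticFunction.coe_zeta_mul_apply]
  exact (ArithmeticFunction.isMultiplicative_zeta.natCast.mul hf).map_mul_of_coprime hab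

lemma sum_divisors_liouville {n : ℕ} (hn : n ≠ 0) :
    ∑ d ∈ n.divisors, ArithmeticFunction.liouville d = if IsSquare n then 1 else 0 := by
  induction n using Nat.recOnPrimeCoprime with
  | zero => contradiction
  | prime_pow p k hp => simp only [sum_divisors_liouville_prime_pow hp, isSquare_prime_pow_iff hp]
  | coprime a b ha hb hab iha ihb =>
    rw [sum_divisors_mul_of_coprime ArithmeticFunction.isMultiplicative_liouville hab,
      iha (by lia), ihb (by lia)]
    simp only [isSquare_mul_iff_of_isRelPrime (Nat.coprime_iff_isRelPrime.mp hab), ite_and, ite_mul,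
      one_mul, zero_mul]

lemma sum_divisors_prime_mul {R : Type*} [AddCommMonoid R] {f : ℕ → R} {p : ℕ} (hp : p.Prime)
    (hf : ∀ d, p ∣ d → f d = 0) (n : ℕ) :
    ∑ d ∈ (p * n).divisors, f d = ∑ d ∈ n.divisors, f d := by
  rcases eq_or_ne n 0 with rfl | hn
  · rw [mul_zero]
  have hpn : p * n ≠ 0 := mul_ne_zero hp.ne_zero hn
  refine (Finset.sum_subset (Nat.divisors_subset_of_dvd hpn (dvd_mul_left n p)) ?_).symm
  intro d hd hdn
  rw [Nat.mem_divisors] at hd hdn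
  by_contra hfd
  have hcop : d.Coprime p := (hp.coprime_iff_not_dvd.mpr fun h ↦ hfd (hf d h)).symm
  exact hdn ⟨hcop.dvd_of_dvd_mul_left hd.1, hn⟩

/-- The dilation `n ↦ f (n / k)`, extended by zero off the multiples of `k`. On Dirichlet
coefficients it is multiplication of the Dirichlet series by `k ^ (-s)`. -/
def dilate {R : Type*} [Zero R] (k : ℕ) (f : ℕ → R) (n : ℕ) : R :=
  if k ∣ n then f (n / k) else 0

lemma dilate_mul {R : Type*} [Zero R] {k : ℕ} (hk : k ≠ 0) (f : ℕ → R) (n : ℕ) :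
    dilate k f (k * n) = f n := by
  rw [dilate, if_pos (dvd_mul_right k n), Nat.mul_div_cancel_left n (Nat.pos_of_ne_zero hk)]

lemma dilate_of_not_dvd {R : Type*} [Zero R] {k n : ℕ} (f : ℕ → R) (h : ¬k ∣ n) :
    dilate k f n = 0 :=
  if_neg h

lemma intCast_dilate {R : Type*} [AddGroupWithOne R] (k : ℕ) (f : ℕ → ℤ) (n : ℕ) :
    ((dilate k f n : ℤ) : R) = dilate k (fun m ↦ (f m : R)) n := by
  simp only [dilate, Int.cast_ite, Int.cast_zero]

lemma sum_divisors_dilate {R : Type*} [AddCommMonoid R] {k : ℕ} (hk : k ≠ 0) (f : ℕ → R) (n : ℕ) :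
    ∑ d ∈ n.divisors, dilate k f d = dilate k (fun m ↦ ∑ d ∈ m.divisors, f d) n := by
  by_cases hkn : k ∣ n
  · obtain ⟨m, rfl⟩ := hkn
    rw [dilate_mul hk]
    have hmem (d : ℕ) : k * d ∈ (k * m).divisors ↔ d ∈ m.divisors := by
      simp [Nat.mul_dvd_mul_iff_left (Nat.pos_of_ne_zero hk), hk]
    refine (Finset.sum_of_injOn (k * ·) (mul_right_injective₀ hk).injOn
      (fun d hd ↦ (hmem d).mpr hd) (fun d hd hdm ↦ ?_) fun d _ ↦ (dilate_mul hk f d).symm).symm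
    refine dilate_of_not_dvd f ?_
    rintro ⟨e, rfl⟩
    exact hdm ⟨e, (hmem e).mp hd, rfl⟩
  · rw [dilate_of_not_dvd _ hkn]
    refine Finset.sum_eq_zero fun d hd ↦ dilate_of_not_dvd f fun hkd ↦ ?_
    exact hkn (hkd.trans (Nat.dvd_of_mem_divisors hd))

lemma neg_one_pow_mul_eq_dilate_sub {R : Type*} [Ring R] {f : ℕ → R}
    (hf : ∀ n, f (2 * n) = f n) (n : ℕ) : (-1) ^ n * f n = 2 * dilate 2 f n - f n := by
  rcases Nat.even_or_odd' n with ⟨m, rfl | rfl⟩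
  · rw [dilate_mul two_ne_zero, hf, (even_two_mul m).neg_one_pow]
    noncomm_ring
  · rw [dilate_of_not_dvd f (by lia), (odd_two_mul_add_one m).neg_one_pow]
    noncomm_ring

lemma LSeriesHasSum_iff_hasSum_div {f : ℕ → ℂ} {s a : ℂ} (hs : s ≠ 0) :
    LSeriesHasSum f s a ↔ HasSum (fun n ↦ f n / (n : ℂ) ^ s) a := by
  rw [LSeriesHasSum, funext (LSeries.term_of_ne_zero' hs f)]

lemma LSeriesHasSum_dilate {k : ℕ} (hk : k ≠ 0) {f : ℕ → ℂ} {s a : ℂ} (hf : LSeriesHasSum f s a) :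
    LSeriesHasSum (dilate k f) s ((k : ℂ) ^ (-s) * a) := by
  have hterm : LSeries.term (dilate k f) s ∘ (k * ·) =
      fun n ↦ (k : ℂ) ^ (-s) * LSeries.term f s n := by
    funext n
    rcases eq_or_ne n 0 with rfl | hn
    · simp
    · simp only [Function.comp_apply, LSeries.term_of_ne_zero (mul_ne_zero hk hn),
        LSeries.term_of_ne_zero hn, dilate_mul hk, Nat.cast_mul, natCast_mul_natCast_cpow, cpow_neg]
      field_simp
  refine ((mul_right_injective₀ hk).hasSum_iff fun n hn ↦ ?_).mp (hterm ▸ hf.mul_left _)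
  have hkn : ¬k ∣ n := fun ⟨m, hm⟩ ↦ hn ⟨m, hm.symm⟩
  simp [LSeries.term_def, dilate_of_not_dvd f hkn]

lemma LSeriesHasSum_iff_of_support_pow {k : ℕ} (hk : k ≠ 0) {f : ℕ → ℂ} {s a : ℂ}
    (hf : ∀ n ≠ 0, (∀ m, m ^ k ≠ n) → f n = 0) :
    LSeriesHasSum f s a ↔ LSeriesHasSum (fun m ↦ f (m ^ k)) (k * s) a := by
  have hterm : LSeries.term f s ∘ (· ^ k) = LSeries.term (fun m ↦ f (m ^ k)) (k * s) := by
    funext m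
    simp [LSeries.term_def, hk, natCast_cpow_natCast_mul]
  rw [LSeriesHasSum, LSeriesHasSum, ← hterm, (Nat.pow_left_injective hk).hasSum_iff]
  intro n hn
  simp only [Set.mem_range, not_exists] at hn
  rcases eq_or_ne n 0 with rfl | hn0
  · exact LSeries.term_zero f s
  · rw [LSeries.term_of_ne_zero hn0, hf n hn0 hn, zero_div]

lemma LSeriesHasSum_neg_one_pow_mul {f : ℕ → ℂ} {s a : ℂ} (hf : ∀ n, f (2 * n) = f n)
    (ha : LSeriesHasSum f s a) :
    LSeriesHasSum (fun n ↦ (-1) ^ n * f n) s ((2 ^ (1 - s) - 1) * a) := by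
  have h := ((LSeriesHasSum_dilate two_ne_zero ha).smul 2).sub ha
  convert h using 1
  · funext n
    simp only [neg_one_pow_mul_eq_dilate_sub hf, Pi.sub_apply, Pi.smul_apply, smul_eq_mul]
  · rw [sub_eq_add_neg 1 s, cpow_add _ _ two_ne_zero, cpow_one, Nat.cast_ofNat]
    ring

lemma LSeriesHasSum_sum_divisors_liouville {s : ℂ} (hs : 1 / 2 < s.re) :
    LSeriesHasSum (fun n ↦ ((∑ d ∈ n.divisors, ArithmeticFunction.liouville d : ℤ) : ℂ)) s
      (riemannZeta (2 * s)) := by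
  have hre : 1 < (2 * s).re := by
    rw [← ofReal_ofNat, re_ofReal_mul]
    linarith
  refine (LSeriesHasSum_iff_of_support_pow two_ne_zero fun n hn hsq ↦ ?_).mpr ?_
  · have hnsq : ¬IsSquare n := by
      rw [isSquare_iff_exists_sq]
      exact fun ⟨m, hm⟩ ↦ hsq m hm.symm
    rw [sum_divisors_liouville hn, if_neg hnsq, Int.cast_zero]
  · refine (LSeriesHasSum_congr _ _ fun {m} hm ↦ ?_).mpr (LSeriesHasSum_one hre)
    rw [sum_divisors_liouville (pow_ne_zero 2 hm), if_pos (IsSquare.sq m), Int.cast_one,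
      Pi.one_apply]

lemma lambdaOdd_eq_add_dilate (n : ℕ) :
    lambdaOdd n = ArithmeticFunction.liouville n + dilate 2 ArithmeticFunction.liouville n := by
  rcases Nat.even_or_odd' n with ⟨m, rfl | rfl⟩
  · have hodd : ¬Odd (2 * m) := Nat.not_odd_iff_even.mpr (even_two_mul m)
    have htwo : ArithmeticFunction.liouville 2 = -1 := by
      simpa only [pow_one] using liouville_prime_pow Nat.prime_two 1
    rw [lambdaOdd, if_neg hodd, dilate_mul two_ne_zero,
      ArithmeticFunction.liouville_apply_mul, htwo]
    ring
  · rw [lambdaOdd, if_pos (odd_two_mul_add_one m), dilate_of_not_dvd _ (by lia), add_zero,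
      liouville, ArithmeticFunction.liouville_apply (by lia)]

lemma sum_divisors_lambdaOdd (n : ℕ) :
    ∑ d ∈ n.divisors, lambdaOdd d = ∑ d ∈ n.divisors, ArithmeticFunction.liouville d +
      dilate 2 (fun m ↦ ∑ d ∈ m.divisors, ArithmeticFunction.liouville d) n := by
  simp only [lambdaOdd_eq_add_dilate, Finset.sum_add_distrib, sum_divisors_dilate two_ne_zero]

lemma sum_divisors_lambdaOdd_two_mul (n : ℕ) :
    ∑ d ∈ (2 * n).divisors, lambdaOdd d = ∑ d ∈ n.divisors, lambdaOdd d :=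
  sum_divisors_prime_mul Nat.prime_two
    (fun _ hd ↦ if_neg (Nat.not_odd_iff_even.mpr (even_iff_two_dvd.mpr hd))) n

lemma LSeriesHasSum_sum_divisors_lambdaOdd {s : ℂ} (hs : 1 / 2 < s.re) :
    LSeriesHasSum (fun n ↦ ((∑ d ∈ n.divisors, lambdaOdd d : ℤ) : ℂ)) s
      ((1 + 2 ^ (-s)) * riemannZeta (2 * s)) := by
  have hL := LSeriesHasSum_sum_divisors_liouville hs
  have h := hL.add (LSeriesHasSum_dilate two_ne_zero hL)
  rw [Nat.cast_ofNat, ← one_add_mul] at h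
  refine (LSeriesHasSum_congr _ _ fun {n} _ ↦ ?_).mpr h
  rw [sum_divisors_lambdaOdd, Int.cast_add, intCast_dilate, Pi.add_apply]

/-- For `Re(s) > 1/2`, the series `Σ_{n≥1} (-1)^n (1*λ_odd)(n)/n^s` converges, with sum
`(1 + 2^{-s})(2^{1-s} - 1) ζ(2s)`. -/
theorem stmt8 (s : ℂ) (hs : 1 / 2 < s.re) :
    HasSum (fun n : ℕ => ((-1 : ℂ) ^ n * ((∑ d ∈ n.divisors, lambdaOdd d : ℤ) : ℂ)) / (n : ℂ) ^ s)
      ((1 + (2 : ℂ) ^ (-s)) * ((2 : ℂ) ^ (1 - s) - 1) * riemannZeta (2 * s)) := by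
  have hs0 : s ≠ 0 := ne_zero_of_re_pos (by linarith)
  have h := LSeriesHasSum_neg_one_pow_mul
    (fun n ↦ congrArg Int.cast (sum_divisors_lambdaOdd_two_mul n))
    (LSeriesHasSum_sum_divisors_lambdaOdd hs)
  rw [← mul_assoc, mul_comm (2 ^ (1 - s) - 1)] at h
  exact (LSeriesHasSum_iff_hasSum_div hs0).mp h
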